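/- Let g, h : ℝⁿ → M_N(ℝ) be smooth with g(x) and h(x) invertible for every x, and let ξ^{(j)}, η^{(j)}, ζ^{(j)} be the trivialized components of g, h and of the pointwise product gh. Then for every j ≥ 1 and every tuple (μ_1,…,μ_j) ∈ {1,…,n}^j, pointwise on ℝⁿ: ζ^{(j)}_{μ_1…μ_j} = ξ^{(j)}_{μ_1…μ_j} + Σ_{λ ∈ P^a(j)} [ξ^{(j_{l−1})}_{λ_{l−1}}, [ξ^{(j_{l−2})}_{λ_{l−2}}, … , [ξ^{(j_1)}_{λ_1}, g η^{(j_l)}_{λ_l} g⁻¹] … ]], where for λ = (λ_1,…,λ_l) of block sizes j_i = |λ_i| the term is the nested commutator with innermost entry g η^{(j_l)}_{λ_l} g⁻¹ bracketed successively with ξ^{(j_1)}_{λ_1}, then ξ^{(j_2)}_{λ_2}, …, then ξ^{(j_{l−1})}_{λ_{l−1}} (for l = 1 the term is just g η^{(j)}_{μ_1…μ_j} g⁻¹). (This is the coordinate, matrix-group form of the fibered multiplication formula of the Lie groupoid J^k(X,G) under the trivialization.) -/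

import Mathlib

/-!
The formula follows by induction on the number of indices, differentiating in the outermost
direction `∂_a`, where `a` is smaller than all the indices already present.

Since `∂_a (g Y g⁻¹) = [ξ_a, g Y g⁻¹] + g (∂_a Y) g⁻¹`, and `∂_a` is a derivation for the
commutator, applying `∂_a` to the nested commutator of a partition `λ` gives one term for each
way of adding `a` to `λ`: adjoining `a` to a block `λ_i` (the derivative falls on `ξ_{λ_i}`, or on
`η_{λ_l}` for the last block), or putting the new block `{a}` in front, directly around
`g η_{λ_l} g⁻¹` (the derivative falls on the conjugation); see `pd_pterm`.

As `a` is smaller than all other indices, adjoining it to a block does not change the maximum of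
that block, while the block `{a}` has to come first in the anti-lexicographic order. Hence each
anti-lexicographically ordered partition of the enlarged index set arises exactly once from one of
the smaller set; see `mem_parts` and `nodup_parts`.
-/


/-- The partial derivative in the `μ`-th coordinate direction of a matrix-valued map on
`ℝⁿ`, taken entrywise. -/
noncomputable def pd {n N : ℕ} (μ : Fin n) (f : (Fin n → ℝ) → Matrix (Fin N) (Fin N) ℝ) :
    (Fin n → ℝ) → Matrix (Fin N) (Fin N) ℝ :=
  fun x => Matrix.of fun a b => fderiv ℝ (fun y => f y a b) x (Pi.single μ 1)

/-- A matrix-valued map on `ℝⁿ` is smooth iff each entry is `C^∞`. -/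
def MSmooth {n N : ℕ} (f : (Fin n → ℝ) → Matrix (Fin N) (Fin N) ℝ) : Prop :=
  ∀ a b, ContDiff ℝ (⊤ : ℕ∞) fun y => f y a b

/-- Iterated partial derivative `∂_{μ_1}⋯∂_{μ_j} f` for a tuple `[μ_1,…,μ_j]`
(`∂_{μ_j}` acts first, `∂_{μ_1}` last). -/
noncomputable def iterPD {n N : ℕ} :
    List (Fin n) → ((Fin n → ℝ) → Matrix (Fin N) (Fin N) ℝ) →
      ((Fin n → ℝ) → Matrix (Fin N) (Fin N) ℝ)
  | [], f => f
  | μ :: rest, f => pd μ (iterPD rest f)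

/-- `ξ_{μ_1…μ_j}(x) = (∂_{μ_1}⋯∂_{μ_j} g)(x) · g(x)⁻¹`. -/
noncomputable def xiTup {n N : ℕ} (g : (Fin n → ℝ) → Matrix (Fin N) (Fin N) ℝ)
    (μs : List (Fin n)) : (Fin n → ℝ) → Matrix (Fin N) (Fin N) ℝ :=
  fun x => iterPD μs g x * (g x)⁻¹

/-- The trivialized jet components, prepend convention: `ξ^{(1)}_μ = (∂_μ g)·g⁻¹` and
`ξ^{(j)}_{μ_1…μ_j} = ∂_{μ_1}(ξ^{(j−1)}_{μ_2…μ_j})` (the new differentiation index is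
prepended, i.e. the head of the list is the outermost derivative). -/
noncomputable def xiJ {n N : ℕ} (g : (Fin n → ℝ) → Matrix (Fin N) (Fin N) ℝ) :
    List (Fin n) → (Fin n → ℝ) → Matrix (Fin N) (Fin N) ℝ
  | [] => fun _ => 1
  | [μ] => fun x => pd μ g x * (g x)⁻¹
  | μ :: rest => pd μ (xiJ g rest)

/-- The ordered tuple `(μ_a)_{a ∈ κ}` with `κ` sorted increasingly. -/
def tupleOf {n : ℕ} (μ : ℕ → Fin n) (κ : Finset ℕ) : List (Fin n) :=
  (κ.sort (· ≤ ·)).map μ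

/-- `ξ_{λ(μ_1…μ_j)} = ξ_{λ_1(μ_1…μ_j)} ⋯ ξ_{λ_l(μ_1…μ_j)}` (ordered matrix product). -/
noncomputable def xiPart {n N : ℕ} (g : (Fin n → ℝ) → Matrix (Fin N) (Fin N) ℝ)
    (μ : ℕ → Fin n) (L : List (Finset ℕ)) (x : Fin n → ℝ) : Matrix (Fin N) (Fin N) ℝ :=
  (L.map fun A => xiTup g (tupleOf μ A) x).prod

/-- The matrix commutator `[A,B] = AB − BA`. -/
def mcomm {N : ℕ} (A B : Matrix (Fin N) (Fin N) ℝ) : Matrix (Fin N) (Fin N) ℝ :=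
  A * B - B * A

/-- A partition of `{1,…,j}`: an ordered tuple of pairwise disjoint nonempty
subsets of `{1,…,j}` whose union is `{1,…,j}`. -/
def IsPartitionOf (j : ℕ) (L : List (Finset ℕ)) : Prop :=
  (∀ A ∈ L, A.Nonempty) ∧ L.Pairwise Disjoint ∧ L.foldr (· ∪ ·) ∅ = Finset.Icc 1 j

/-- Membership in `P₁⁺(j)`: a partition of `{1,…,j}` whose first block contains `1`. -/
def IsP1Plus (j : ℕ) (L : List (Finset ℕ)) : Prop :=
  IsPartitionOf j L ∧ 1 ∈ L.headI

/-- Membership in `P^a(j)`: a partition of `{1,…,j}` that is anti-lexicographically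
ordered, i.e. `max λ₁ < max λ₂ < … < max λ_l`. -/
def IsPAnti (j : ℕ) (L : List (Finset ℕ)) : Prop :=
  IsPartitionOf j L ∧ (L.map fun A => A.sup id).Chain' (· < ·)

/-- `λ_{[s]}⁺` (for `1 ≤ s ≤ l`): adjoin `j+1` to the `s`-th block (1-indexed). -/
def plusOp (j : ℕ) (L : List (Finset ℕ)) (s : ℕ) : List (Finset ℕ) :=
  L.set (s - 1) (insert (j + 1) (L.getD (s - 1) ∅))

/-- `λ_{[s]}⁻` (for `1 ≤ s ≤ l`): insert the new singleton block `{j+1}` right after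
the `s`-th block (1-indexed). -/
def minusOp (j : ℕ) (L : List (Finset ℕ)) (s : ℕ) : List (Finset ℕ) :=
  L.take s ++ [{j + 1}] ++ L.drop s

/-- `ξ^{(|A|)}` evaluated on the subtuple of `(μ_a)` indexed by the block `A` (sorted
increasingly), with the head-outermost (prepend) convention for `xiJ`. -/
noncomputable def xiBlock {n N : ℕ} (g : (Fin n → ℝ) → Matrix (Fin N) (Fin N) ℝ)
    (μ : ℕ → Fin n) (A : Finset ℕ) : (Fin n → ℝ) → Matrix (Fin N) (Fin N) ℝ :=
  xiJ g (tupleOf μ A)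

/-- The summand of the product formula associated to a partition `λ = (λ_1,…,λ_l)`:
the nested commutator `[ξ^{(j_{l−1})}_{λ_{l−1}}, [… , [ξ^{(j_1)}_{λ_1}, g η^{(j_l)}_{λ_l} g⁻¹] …]]`,
which for `l = 1` is just `g η^{(j)}_{λ_1} g⁻¹`. -/
noncomputable def prodTerm {n N : ℕ} (g h : (Fin n → ℝ) → Matrix (Fin N) (Fin N) ℝ)
    (μ : ℕ → Fin n) (L : List (Finset ℕ)) (x : Fin n → ℝ) : Matrix (Fin N) (Fin N) ℝ :=
  L.dropLast.foldl (fun acc A => mcomm (xiBlock g μ A x) acc)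
    (g x * xiBlock h μ (L.getLastD ∅) x * (g x)⁻¹)

/-! ### Calculus of smooth matrix-valued maps -/

section Calculus

variable {n N : ℕ}

/-- Matrix-valued maps on `ℝⁿ`; the pointwise operations make this a ring. -/
abbrev MMap (n N : ℕ) := (Fin n → ℝ) → Matrix (Fin N) (Fin N) ℝ

lemma MSmooth.diff {f : MMap n N} (hf : MSmooth f) (a b : Fin N) (x : Fin n → ℝ) :
    DifferentiableAt ℝ (fun y => f y a b) x :=
  ((hf a b).differentiable (by simp)).differentiableAt

lemma MSmooth.pd {f : MMap n N} (hf : MSmooth f) (μ : Fin n) : MSmooth (pd μ f) := by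
  intro a b
  exact ((hf a b).fderiv_right (m := ((⊤ : ℕ∞) : WithTop ℕ∞)) (by simp)).clm_apply contDiff_const

lemma MSmooth.add {f g : MMap n N} (hf : MSmooth f) (hg : MSmooth g) : MSmooth (f + g) :=
  fun a b => (hf a b).add (hg a b)

lemma MSmooth.sub {f g : MMap n N} (hf : MSmooth f) (hg : MSmooth g) : MSmooth (f - g) :=
  fun a b => (hf a b).sub (hg a b)

lemma MSmooth.mul {f g : MMap n N} (hf : MSmooth f) (hg : MSmooth g) : MSmooth (f * g) := by
  intro a b
  simp only [Pi.mul_apply, Matrix.mul_apply]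
  exact ContDiff.sum fun c _ => (hf a c).mul (hg c b)

lemma msmooth_const (A : Matrix (Fin N) (Fin N) ℝ) : MSmooth (fun _ : Fin n → ℝ => A) :=
  fun _ _ => contDiff_const

lemma MSmooth.det {f : MMap n N} (hf : MSmooth f) :
    ContDiff ℝ (⊤ : ℕ∞) fun y => (f y).det := by
  simp only [Matrix.det_apply']
  exact ContDiff.sum fun σ _ => contDiff_const.mul (contDiff_prod fun i _ => hf _ _)

/-- The pointwise inverse matrix. -/
noncomputable def minv (g : MMap n N) : MMap n N := fun x => (g x)⁻¹

lemma MSmooth.minv {g : MMap n N} (hg : MSmooth g) (hginv : ∀ x, IsUnit (g x)) :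
    MSmooth (minv g) := by
  have hdet : ∀ x, (g x).det ≠ 0 := fun x =>
    ((Matrix.isUnit_iff_isUnit_det _).1 (hginv x)).ne_zero
  intro a b
  simp only [_root_.minv, Matrix.inv_def, Ring.inverse_eq_inv', Matrix.smul_apply, smul_eq_mul,
    Matrix.adjugate_apply]
  refine (hg.det.inv hdet).mul (MSmooth.det (f := fun y => (g y).updateRow b (Pi.single a 1)) ?_)
  intro c d
  by_cases hc : c = b
  · subst hc
    simp only [Matrix.updateRow_self]
    exact contDiff_const
  · simp only [Matrix.updateRow_ne hc]
    exact hg c d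

lemma minv_mul {g : MMap n N} (hginv : ∀ x, IsUnit (g x)) : minv g * g = 1 := by
  funext x
  exact Matrix.nonsing_inv_mul _ ((Matrix.isUnit_iff_isUnit_det _).1 (hginv x))

lemma mul_minv {g : MMap n N} (hginv : ∀ x, IsUnit (g x)) : g * minv g = 1 := by
  funext x
  exact Matrix.mul_nonsing_inv _ ((Matrix.isUnit_iff_isUnit_det _).1 (hginv x))

lemma pd_add {f g : MMap n N} (hf : MSmooth f) (hg : MSmooth g) (μ : Fin n) :
    pd μ (f + g) = pd μ f + pd μ g := by
  funext x
  ext a b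
  simp [pd, fderiv_fun_add (hf.diff a b x) (hg.diff a b x)]

lemma pd_sub {f g : MMap n N} (hf : MSmooth f) (hg : MSmooth g) (μ : Fin n) :
    pd μ (f - g) = pd μ f - pd μ g := by
  funext x
  ext a b
  simp [pd, fderiv_fun_sub (hf.diff a b x) (hg.diff a b x)]

lemma pd_mul {f g : MMap n N} (hf : MSmooth f) (hg : MSmooth g) (μ : Fin n) :
    pd μ (f * g) = pd μ f * g + f * pd μ g := by
  funext x
  ext a b
  simp only [pd, Pi.mul_apply, Pi.add_apply, Matrix.mul_apply, Matrix.add_apply, Matrix.of_apply]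
  rw [fderiv_fun_sum (A := fun c y => f y a c * g y c b)
    fun c _ => (hf.diff a c x).fun_mul (hg.diff c b x), ← Finset.sum_add_distrib]
  simp only [sum_apply]
  refine Finset.sum_congr rfl fun c _ => ?_
  rw [fderiv_fun_mul (hf.diff a c x) (hg.diff c b x)]
  simp only [add_apply, smul_apply, smul_eq_mul]
  ring

lemma pd_const (A : Matrix (Fin N) (Fin N) ℝ) (μ : Fin n) :
    pd μ (fun _ : Fin n → ℝ => A) = 0 := by
  funext x
  ext a b
  simp [pd]

lemma pd_minv {g : MMap n N} (hg : MSmooth g) (hginv : ∀ x, IsUnit (g x)) (μ : Fin n) :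
    pd μ (minv g) = -(minv g * pd μ g * minv g) := by
  have h1 := pd_mul hg (hg.minv hginv) μ
  have h2 : pd μ (g * minv g) = 0 := by
    rw [mul_minv hginv]
    exact pd_const 1 μ
  rw [h2] at h1
  have h3 : minv g * (pd μ g * minv g + g * pd μ (minv g)) = 0 := by rw [← h1, mul_zero]
  rw [mul_add, ← mul_assoc, ← mul_assoc, minv_mul hginv, one_mul] at h3
  exact (neg_eq_of_add_eq_zero_right h3).symm

lemma MSmooth.list_sum {l : List (MMap n N)} (hl : ∀ f ∈ l, MSmooth f) : MSmooth l.sum := by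
  induction l with
  | nil => exact msmooth_const 0
  | cons f l ih =>
    simp only [List.mem_cons, forall_eq_or_imp] at hl
    rw [List.sum_cons]
    exact hl.1.add (ih hl.2)

lemma pd_list_sum {l : List (MMap n N)} (hl : ∀ f ∈ l, MSmooth f) (μ : Fin n) :
    pd μ l.sum = (l.map (pd μ)).sum := by
  induction l with
  | nil => exact pd_const 0 μ
  | cons f l ih =>
    simp only [List.mem_cons, forall_eq_or_imp] at hl
    rw [List.sum_cons, pd_add hl.1 (MSmooth.list_sum hl.2), ih hl.2, List.map_cons, List.sum_cons]

lemma xiJ_cons (g : MMap n N) (μ : Fin n) {l : List (Fin n)} (hl : l ≠ []) :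
    xiJ g (μ :: l) = pd μ (xiJ g l) := by
  cases l with
  | nil => exact absurd rfl hl
  | cons ν l => simp only [xiJ]

lemma xiJ_singleton (g : MMap n N) (μ : Fin n) : xiJ g [μ] = pd μ g * minv g := by
  simp only [xiJ]
  rfl

lemma MSmooth.xiJ {g : MMap n N} (hg : MSmooth g) (hginv : ∀ x, IsUnit (g x))
    (l : List (Fin n)) : MSmooth (xiJ g l) := by
  induction l with
  | nil => exact msmooth_const 1
  | cons μ l ih =>
    rcases eq_or_ne l [] with rfl | hl
    · rw [xiJ_singleton]
      exact (hg.pd μ).mul (hg.minv hginv)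
    · rw [xiJ_cons g μ hl]
      exact ih.pd μ

lemma tupleOf_insert (μ : ℕ → Fin n) {a : ℕ} {B : Finset ℕ} (h : ∀ b ∈ B, a < b) :
    tupleOf μ (insert a B) = μ a :: tupleOf μ B := by
  rw [tupleOf, Finset.sort_insert _ (fun b hb => (h b hb).le) (fun ha => lt_irrefl _ (h a ha))]
  rfl

lemma xiBlock_insert (g : MMap n N) (μ : ℕ → Fin n) {a : ℕ} {B : Finset ℕ}
    (h : ∀ b ∈ B, a < b) (hB : B.Nonempty) :
    xiBlock g μ (insert a B) = pd (μ a) (xiBlock g μ B) := by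
  rw [xiBlock, tupleOf_insert μ h, xiJ_cons]
  · rfl
  · simpa [tupleOf, ← List.length_eq_zero_iff] using hB.ne_empty

lemma xiBlock_singleton (g : MMap n N) (μ : ℕ → Fin n) (a : ℕ) :
    xiBlock g μ {a} = pd (μ a) g * minv g := by
  simp [xiBlock, tupleOf, xiJ_singleton]

end Calculus

/-! ### Adding a smallest element to an ordered partition -/

section Combinatorics

/-- All lists of blocks obtained by adjoining `a` to exactly one of the blocks. -/
def ins (a : ℕ) : List (Finset ℕ) → List (List (Finset ℕ))
  | [] => []
  | B :: L => (insert a B :: L) :: (ins a L).map (B :: ·)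

/-- For a strictly increasing list, the list of all anti-lexicographically ordered partitions of
its set of entries. -/
def parts : List ℕ → List (List (Finset ℕ))
  | [] => [[]]
  | a :: l => (parts l).flatMap fun L => ({a} :: L) :: ins a L

/-- `L` is an anti-lexicographically ordered partition of `S`, stated recursively in the list of
blocks. -/
def PA (S : Finset ℕ) : List (Finset ℕ) → Prop
  | [] => S = ∅
  | B :: L => B.Nonempty ∧ B ⊆ S ∧ (∀ m ∈ L.map fun A => A.sup id, B.sup id < m) ∧ PA (S \ B) L

lemma PA.subset {S : Finset ℕ} {L : List (Finset ℕ)} (h : PA S L) : ∀ A ∈ L, A ⊆ S := by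
  induction L generalizing S with
  | nil => simp
  | cons B L ih =>
    obtain ⟨-, h2, -, h4⟩ := h
    simp only [List.mem_cons, forall_eq_or_imp]
    exact ⟨h2, fun A hA => (ih h4 A hA).trans Finset.sdiff_subset⟩

lemma PA.nonempty {S : Finset ℕ} {L : List (Finset ℕ)} (h : PA S L) : ∀ A ∈ L, A.Nonempty := by
  induction L generalizing S with
  | nil => simp
  | cons B L ih =>
    simp only [List.mem_cons, forall_eq_or_imp]
    exact ⟨h.1, ih h.2.2.2⟩

lemma PA.disjoint {S T : Finset ℕ} {L : List (Finset ℕ)} (h : PA (S \ T) L) :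
    ∀ A ∈ L, Disjoint T A := fun A hA =>
  Finset.disjoint_of_subset_right (h.subset A hA) Finset.disjoint_sdiff

lemma isPAnti_iff (j : ℕ) (L : List (Finset ℕ)) : IsPAnti j L ↔ PA (Finset.Icc 1 j) L := by
  unfold IsPAnti IsPartitionOf List.Chain'
  rw [List.isChain_iff_pairwise]
  generalize Finset.Icc 1 j = S
  induction L generalizing S with
  | nil => simp [PA, eq_comm]
  | cons B L ih =>
    simp only [PA, ← ih, List.mem_cons, forall_eq_or_imp, List.pairwise_cons, List.foldr_cons,
      List.map_cons]
    have hdisj : (∀ A ∈ L, Disjoint B A) → Disjoint B (L.foldr (· ∪ ·) ∅) := by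
      clear ih
      intro h
      induction L with
      | nil => simp
      | cons A L ih =>
        simp only [List.mem_cons, forall_eq_or_imp] at h
        simp only [List.foldr_cons, Finset.disjoint_union_right]
        exact ⟨h.1, ih h.2⟩
    constructor
    · rintro ⟨⟨⟨h1, h2⟩, ⟨h3, h4⟩, h5⟩, h6, h7⟩
      refine ⟨h1, h5 ▸ Finset.subset_union_left, h6, ⟨h2, h4, ?_⟩, h7⟩
      rw [← h5, Finset.union_sdiff_cancel_left (hdisj h3)]
    · rintro ⟨h1, h2, h3, h4, h5⟩
      refine ⟨⟨⟨h1, h4.1⟩, ⟨PA.disjoint ((ih _).1 ⟨h4, h5⟩), h4.2.1⟩, ?_⟩, h3, h5⟩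
      rw [h4.2.2, Finset.union_sdiff_of_subset h2]

lemma sup_insert_min {a : ℕ} {B : Finset ℕ} (hB : B.Nonempty) (h : ∀ b ∈ B, a < b) :
    (insert a B).sup id = B.sup id := by
  obtain ⟨b, hb⟩ := hB
  rw [Finset.sup_insert]
  exact sup_eq_right.2 ((h b hb).le.trans (Finset.le_sup (f := id) hb))

/-- Adjoining an element smaller than all others to a block does not change the maxima. -/
lemma map_sup_of_mem_ins {a : ℕ} {L L' : List (Finset ℕ)} (hne : ∀ A ∈ L, A.Nonempty)
    (hlt : ∀ A ∈ L, ∀ b ∈ A, a < b) (h : L' ∈ ins a L) :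
    (L'.map fun A => A.sup id) = L.map fun A => A.sup id := by
  induction L generalizing L' with
  | nil => simp [ins] at h
  | cons B L ih =>
    simp only [List.mem_cons, forall_eq_or_imp] at hne hlt
    simp only [ins, List.mem_cons, List.mem_map] at h
    rcases h with rfl | ⟨M, hM, rfl⟩
    · rw [List.map_cons, List.map_cons, sup_insert_min hne.1 hlt.1]
    · rw [List.map_cons, List.map_cons, ih hne.2 hlt.2 hM]

lemma PA_of_mem_ins {a : ℕ} {S : Finset ℕ} (hS : ∀ s ∈ S, a < s) {L L' : List (Finset ℕ)}
    (hL : PA S L) (h : L' ∈ ins a L) : PA (insert a S) L' := by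
  induction L generalizing S L' with
  | nil => simp [ins] at h
  | cons B L ih =>
    obtain ⟨h1, h2, h3, h4⟩ := hL
    have haS : a ∉ S := fun ha => lt_irrefl _ (hS a ha)
    have hS' : ∀ s ∈ S \ B, a < s := fun s hs => hS s (Finset.sdiff_subset hs)
    simp only [ins, List.mem_cons, List.mem_map] at h
    rcases h with rfl | ⟨M, hM, rfl⟩
    · refine ⟨Finset.insert_nonempty _ _, Finset.insert_subset_insert _ h2, ?_, ?_⟩
      · rw [sup_insert_min h1 fun b hb => hS b (h2 hb)]
        exact h3
      · have : insert a S \ insert a B = S \ B := by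
          ext s
          simp only [Finset.mem_sdiff, Finset.mem_insert]
          grind
        rw [this]
        exact h4
    · refine ⟨h1, h2.trans (Finset.subset_insert _ _), ?_, ?_⟩
      · rw [map_sup_of_mem_ins h4.nonempty (fun A hA b hb => hS' b (h4.subset A hA hb)) hM]
        exact h3
      · rw [Finset.insert_sdiff_of_notMem _ fun ha => haS (h2 ha)]
        exact ih hS' h4 hM

lemma PA_cons_singleton {a : ℕ} {S : Finset ℕ} (hS : ∀ s ∈ S, a < s) {L : List (Finset ℕ)}
    (hL : PA S L) : PA (insert a S) ({a} :: L) := by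
  have haS : a ∉ S := fun ha => lt_irrefl _ (hS a ha)
  refine ⟨Finset.singleton_nonempty _, by simp, ?_, ?_⟩
  · simp only [List.mem_map, Finset.sup_singleton, id]
    rintro m ⟨A, hA, rfl⟩
    obtain ⟨b, hb⟩ := hL.nonempty A hA
    exact (hS b (hL.subset A hA hb)).trans_le (Finset.le_sup (f := id) hb)
  · rwa [Finset.insert_sdiff_of_mem _ (Finset.mem_singleton_self a), Finset.sdiff_singleton_eq_erase,
      Finset.erase_eq_of_notMem haS]

/-- Removing the smallest element from an ordered partition. -/
lemma exists_of_PA_insert {a : ℕ} {S : Finset ℕ} (hS : ∀ s ∈ S, a < s) {L' : List (Finset ℕ)}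
    (h : PA (insert a S) L') : ∃ L, PA S L ∧ L' ∈ ({a} :: L) :: ins a L := by
  induction L' generalizing S with
  | nil => exact absurd h (Finset.insert_ne_empty _ _)
  | cons B T ih =>
    obtain ⟨h1, h2, h3, h4⟩ := h
    have haS : a ∉ S := fun ha => lt_irrefl _ (hS a ha)
    by_cases haB : a ∈ B
    · rcases eq_or_ne B {a} with rfl | hne
      · rw [Finset.insert_sdiff_of_mem _ haB, Finset.sdiff_singleton_eq_erase,
      Finset.erase_eq_of_notMem haS] at h4
        exact ⟨T, h4, by simp⟩
      · have hins : insert a (B.erase a) = B := Finset.insert_erase haB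
        have hsub : B.erase a ⊆ S := fun b hb =>
          (Finset.mem_insert.1 (h2 (Finset.mem_of_mem_erase hb))).resolve_left
            (Finset.ne_of_mem_erase hb)
        have hne' : (B.erase a).Nonempty := by
          rw [Finset.nonempty_iff_ne_empty]
          intro he
          rw [he] at hins
          exact hne hins.symm
        refine ⟨B.erase a :: T, ⟨hne', hsub, ?_, ?_⟩, ?_⟩
        · rwa [← sup_insert_min hne' fun b hb => hS b (hsub hb), hins]
        · have : S \ B.erase a = insert a S \ B := by
            ext s
            simp only [Finset.mem_sdiff, Finset.mem_insert, Finset.mem_erase]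
            grind
          rwa [this]
        · simp [ins, hins]
    · have hBS : B ⊆ S := (Finset.subset_insert_iff_of_notMem haB).1 h2
      rw [Finset.insert_sdiff_of_notMem _ haB] at h4
      obtain ⟨L, hL, hT⟩ := ih (fun s hs => hS s (Finset.sdiff_subset hs)) h4
      rcases List.mem_cons.1 hT with rfl | hT
      · -- the block `{a}` cannot follow `B`, whose elements are larger than `a`
        obtain ⟨b, hb⟩ := h1
        have := h3 a (by simp)
        have h5 := hS b (hBS hb)
        have h6 := Finset.le_sup (f := id) hb
        simp only [id] at h6
        omega
      · refine ⟨B :: L, ⟨h1, hBS, ?_, hL⟩, ?_⟩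
        · rwa [← map_sup_of_mem_ins hL.nonempty
            (fun A hA b hb => hS b (Finset.sdiff_subset (hL.subset A hA hb))) hT]
        · simp [ins, hT]

lemma mem_parts {l : List ℕ} (hl : l.Pairwise (· < ·)) (L : List (Finset ℕ)) :
    L ∈ parts l ↔ PA l.toFinset L := by
  induction l generalizing L with
  | nil =>
    cases L with
    | nil => simp [parts, PA]
    | cons B L =>
      simp only [parts, PA, List.mem_singleton, List.toFinset_nil, Finset.subset_empty]
      constructor
      · simp
      · rintro ⟨h1, h2, -⟩
        exact absurd h2 h1.ne_empty
  | cons a l ih =>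
    rw [List.pairwise_cons] at hl
    have hS : ∀ s ∈ l.toFinset, a < s := by simpa using hl.1
    rw [List.toFinset_cons, parts, List.mem_flatMap]
    constructor
    · rintro ⟨M, hM, hL⟩
      rw [ih hl.2] at hM
      rcases List.mem_cons.1 hL with rfl | hL
      · exact PA_cons_singleton hS hM
      · exact PA_of_mem_ins hS hM hL
    · intro h
      obtain ⟨M, hM, hL⟩ := exists_of_PA_insert hS h
      exact ⟨M, (ih hl.2 M).2 hM, hL⟩

/-- Delete `a` from all blocks and drop the block that becomes empty, if there is one. -/
def del (a : ℕ) (L : List (Finset ℕ)) : List (Finset ℕ) :=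
  (L.map fun A => A.erase a).filter fun A => A ≠ ∅

lemma del_eq_self {a : ℕ} {L : List (Finset ℕ)} (hne : ∀ A ∈ L, A.Nonempty)
    (ha : ∀ A ∈ L, a ∉ A) : del a L = L := by
  induction L with
  | nil => rfl
  | cons B L ih =>
    simp only [List.mem_cons, forall_eq_or_imp] at hne ha
    have := ih hne.2 ha.2
    simp only [del] at this ⊢
    rw [List.map_cons, Finset.erase_eq_of_notMem ha.1,
      List.filter_cons_of_pos (by simpa using hne.1.ne_empty), this]

lemma del_of_mem_ins {a : ℕ} {L L' : List (Finset ℕ)} (hne : ∀ A ∈ L, A.Nonempty)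
    (ha : ∀ A ∈ L, a ∉ A) (h : L' ∈ ins a L) : del a L' = L := by
  induction L generalizing L' with
  | nil => simp [ins] at h
  | cons B L ih =>
    simp only [List.mem_cons, forall_eq_or_imp] at hne ha
    simp only [ins, List.mem_cons, List.mem_map] at h
    rcases h with rfl | ⟨M, hM, rfl⟩
    · have := del_eq_self hne.2 ha.2
      simp only [del] at this ⊢
      rw [List.map_cons, Finset.erase_insert ha.1,
        List.filter_cons_of_pos (by simpa using hne.1.ne_empty), this]
    · have := ih hne.2 ha.2 hM
      simp only [del] at this ⊢
      rw [List.map_cons, Finset.erase_eq_of_notMem ha.1,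
        List.filter_cons_of_pos (by simpa using hne.1.ne_empty), this]

lemma del_cons_singleton {a : ℕ} {L : List (Finset ℕ)} (hne : ∀ A ∈ L, A.Nonempty)
    (ha : ∀ A ∈ L, a ∉ A) : del a ({a} :: L) = L := by
  have := del_eq_self hne ha
  simp only [del] at this ⊢
  rw [List.map_cons, Finset.erase_singleton, List.filter_cons_of_neg (by simp), this]

lemma length_of_mem_ins {a : ℕ} {L L' : List (Finset ℕ)} (h : L' ∈ ins a L) :
    L'.length = L.length := by
  induction L generalizing L' with
  | nil => simp [ins] at h
  | cons B L ih =>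
    simp only [ins, List.mem_cons, List.mem_map] at h
    rcases h with rfl | ⟨M, hM, rfl⟩
    · rfl
    · rw [List.length_cons, List.length_cons, ih hM]

lemma nodup_ins {a : ℕ} {L : List (Finset ℕ)} (ha : ∀ A ∈ L, a ∉ A) : (ins a L).Nodup := by
  induction L with
  | nil => simp [ins]
  | cons B L ih =>
    simp only [List.mem_cons, forall_eq_or_imp] at ha
    rw [ins, List.nodup_cons]
    refine ⟨?_, (ih ha.2).map fun _ _ h => (List.cons.inj h).2⟩
    simp only [List.mem_map, not_exists, not_and]
    intro M _ h
    exact ha.1 ((List.cons.inj h).1 ▸ Finset.mem_insert_self a B)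

lemma nodup_parts {l : List ℕ} (hl : l.Pairwise (· < ·)) : (parts l).Nodup := by
  induction l with
  | nil => simp [parts]
  | cons a l ih =>
    rw [List.pairwise_cons] at hl
    have key : ∀ M ∈ parts l, (∀ A ∈ M, A.Nonempty) ∧ ∀ A ∈ M, a ∉ A := by
      intro M hM
      rw [mem_parts hl.2] at hM
      exact ⟨hM.nonempty, fun A hA haA =>
        lt_irrefl _ (hl.1 a (List.mem_toFinset.1 (hM.subset A hA haA)))⟩
    have hdel : ∀ M ∈ parts l, ∀ L ∈ ({a} :: M) :: ins a M, del a L = M := by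
      intro M hM L hL
      rcases List.mem_cons.1 hL with rfl | hL
      · exact del_cons_singleton (key M hM).1 (key M hM).2
      · exact del_of_mem_ins (key M hM).1 (key M hM).2 hL
    rw [parts, List.nodup_flatMap]
    refine ⟨fun M hM => ?_, ?_⟩
    · rw [List.nodup_cons]
      refine ⟨fun h => ?_, nodup_ins (key M hM).2⟩
      have := length_of_mem_ins h
      simp at this
    · refine (ih hl.2).imp_of_mem fun {M M'} hM hM' hne => ?_
      intro L h1 h2
      exact hne ((hdel M hM L h1).symm.trans (hdel M' hM' L h2))

lemma ins_append_singleton (a : ℕ) (L : List (Finset ℕ)) (B : Finset ℕ) :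
    ins a (L ++ [B]) = (ins a L).map (· ++ [B]) ++ [L ++ [insert a B]] := by
  induction L with
  | nil => simp [ins]
  | cons A L ih => simp [ins, ih, Function.comp_def]

end Combinatorics

/-! ### Differentiating nested commutators -/

section Nested

variable {n N : ℕ}

/-- The nested commutator of a matrix-valued map `X` with the `ξ`-components of the blocks in `L`,
the first block being innermost. -/
noncomputable def nest (g : MMap n N) (μ : ℕ → Fin n) (X : MMap n N) (L : List (Finset ℕ)) :
    MMap n N :=
  L.foldl (fun acc A => xiBlock g μ A * acc - acc * xiBlock g μ A) X

/-- The summand of the product formula, as a map on `ℝⁿ`. -/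
noncomputable def pterm (g h : MMap n N) (μ : ℕ → Fin n) (L : List (Finset ℕ)) : MMap n N :=
  nest g μ (g * xiBlock h μ (L.getLastD ∅) * minv g) L.dropLast

lemma pterm_apply (g h : MMap n N) (μ : ℕ → Fin n) (L : List (Finset ℕ)) (x : Fin n → ℝ) :
    pterm g h μ L x = prodTerm g h μ L x := by
  have key : ∀ (M : List (Finset ℕ)) (X : MMap n N),
      nest g μ X M x = M.foldl (fun acc A => mcomm (xiBlock g μ A x) acc) (X x) := by
    intro M
    induction M with
    | nil => intro X; rfl
    | cons A M ih => intro X; exact ih _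
  exact key _ _

lemma pterm_append (g h : MMap n N) (μ : ℕ → Fin n) (L : List (Finset ℕ)) (B : Finset ℕ) :
    pterm g h μ (L ++ [B]) = nest g μ (g * xiBlock h μ B * minv g) L := by
  simp [pterm]

lemma nest_add (g : MMap n N) (μ : ℕ → Fin n) (X Y : MMap n N) (L : List (Finset ℕ)) :
    nest g μ (X + Y) L = nest g μ X L + nest g μ Y L := by
  induction L generalizing X Y with
  | nil => rfl
  | cons A L ih =>
    simp only [nest, List.foldl_cons] at ih ⊢
    rw [← ih]
    congr 1
    noncomm_ring

variable {g h : (Fin n → ℝ) → Matrix (Fin N) (Fin N) ℝ}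

lemma MSmooth.nest (hg : MSmooth g) (hginv : ∀ x, IsUnit (g x)) (μ : ℕ → Fin n) {X : MMap n N}
    (hX : MSmooth X) (L : List (Finset ℕ)) : MSmooth (nest g μ X L) := by
  induction L generalizing X with
  | nil => exact hX
  | cons A L ih =>
    have hA : MSmooth (xiBlock g μ A) := hg.xiJ hginv _
    exact ih ((hA.mul hX).sub (hX.mul hA))

lemma MSmooth.pterm (hg : MSmooth g) (hginv : ∀ x, IsUnit (g x)) (hh : MSmooth h)
    (hhinv : ∀ x, IsUnit (h x)) (μ : ℕ → Fin n) (L : List (Finset ℕ)) :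
    MSmooth (pterm g h μ L) :=
  MSmooth.nest hg hginv μ ((hg.mul (hh.xiJ hhinv _)).mul (hg.minv hginv)) _

/-- The derivative of a nested commutator falls either on the innermost entry or on one of the
blocks. -/
lemma pd_nest (hg : MSmooth g) (hginv : ∀ x, IsUnit (g x)) (μ : ℕ → Fin n) {X : MMap n N}
    (hX : MSmooth X) {a : ℕ} {L : List (Finset ℕ)} (hne : ∀ A ∈ L, A.Nonempty)
    (hlt : ∀ A ∈ L, ∀ b ∈ A, a < b) :
    pd (μ a) (nest g μ X L) = nest g μ (pd (μ a) X) L + ((ins a L).map (nest g μ X)).sum := by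
  induction L generalizing X with
  | nil => simp [nest, ins]
  | cons A L ih =>
    simp only [List.mem_cons, forall_eq_or_imp] at hne hlt
    have hA : MSmooth (xiBlock g μ A) := hg.xiJ hginv _
    have hstep : ∀ (Y : MMap n N) (B : Finset ℕ) (M : List (Finset ℕ)), nest g μ Y (B :: M)
        = nest g μ (xiBlock g μ B * Y - Y * xiBlock g μ B) M := fun _ _ _ => rfl
    rw [hstep, ih ((hA.mul hX).sub (hX.mul hA)) hne.2 hlt.2, ins, List.map_cons, List.sum_cons,
      List.map_map, hstep, hstep, ← add_assoc, ← nest_add, xiBlock_insert g μ hlt.1 hne.1,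
      pd_sub (hA.mul hX) (hX.mul hA), pd_mul hA hX, pd_mul hX hA]
    congr 2
    noncomm_ring

lemma pd_conj (hg : MSmooth g) (hginv : ∀ x, IsUnit (g x)) {Y : MMap n N} (hY : MSmooth Y)
    (μ : Fin n) :
    pd μ (g * Y * minv g) = (pd μ g * minv g * (g * Y * minv g)
      - g * Y * minv g * (pd μ g * minv g)) + g * pd μ Y * minv g := by
  have h1 : pd μ g * minv g * (g * Y * minv g) = pd μ g * Y * minv g := by
    rw [show pd μ g * minv g * (g * Y * minv g) = pd μ g * (minv g * g) * Y * minv g by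
      noncomm_ring, minv_mul hginv, mul_one]
  rw [pd_mul (hg.mul hY) (hg.minv hginv), pd_mul hg hY, pd_minv hg hginv, h1]
  noncomm_ring

/-- The derivative of the term of a partition `L` is the sum of the terms of all the partitions
obtained by adding the new smallest element `a` to `L`. -/
lemma pd_pterm (hg : MSmooth g) (hginv : ∀ x, IsUnit (g x)) (hh : MSmooth h)
    (hhinv : ∀ x, IsUnit (h x)) (μ : ℕ → Fin n) {a : ℕ} {L : List (Finset ℕ)} (hL : L ≠ [])
    (hne : ∀ A ∈ L, A.Nonempty) (hlt : ∀ A ∈ L, ∀ b ∈ A, a < b) :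
    pd (μ a) (pterm g h μ L) = ((({a} :: L) :: ins a L).map (pterm g h μ)).sum := by
  obtain ⟨M, B, rfl⟩ := List.eq_nil_or_concat' L |>.resolve_left hL
  simp only [List.mem_append, List.mem_singleton, or_imp, forall_and, forall_eq] at hne hlt
  have hB : MSmooth (xiBlock h μ B) := hh.xiJ hhinv _
  rw [pterm_append, pd_nest hg hginv μ ((hg.mul hB).mul (hg.minv hginv)) hne.1 hlt.1,
    pd_conj hg hginv hB, nest_add, ← xiBlock_insert h μ hlt.2 hne.2, ← xiBlock_singleton,
    List.map_cons, List.sum_cons, ins_append_singleton, List.map_append, List.sum_append,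
    List.map_map, ← List.cons_append, pterm_append]
  simp only [List.map_cons, List.map_nil, List.sum_singleton, pterm_append, Function.comp_def]
  rw [add_assoc, add_comm (nest g μ (g * xiBlock h μ (insert a B) * minv g) M)]
  rfl

/-- The product formula as an identity of maps, for an arbitrary nonempty increasing list of
indices; this generality lets the induction prepend a smaller index. -/
lemma xiJ_mul (hg : MSmooth g) (hginv : ∀ x, IsUnit (g x)) (hh : MSmooth h)
    (hhinv : ∀ x, IsUnit (h x)) (μ : ℕ → Fin n) {l : List ℕ} (hl0 : l ≠ [])
    (hl : l.Pairwise (· < ·)) :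
    xiJ (g * h) (l.map μ) = xiJ g (l.map μ) + ((parts l).map (pterm g h μ)).sum := by
  induction l with
  | nil => exact absurd rfl hl0
  | cons a l ih =>
    rw [List.pairwise_cons] at hl
    rcases eq_or_ne l [] with rfl | hl1
    · have h1 : minv (g * h) = minv h * minv g := by
        funext x
        exact Matrix.mul_inv_rev _ _
      have h2 : ((parts [a]).map (pterm g h μ)).sum = g * (pd (μ a) h * minv h) * minv g := by
        simp [parts, ins, pterm, nest, xiBlock_singleton]
      rw [h2, List.map_cons, List.map_nil, xiJ_singleton, xiJ_singleton, h1, pd_mul hg hh]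
      rw [show (pd (μ a) g * h + g * pd (μ a) h) * (minv h * minv g)
        = pd (μ a) g * (h * minv h) * minv g + g * (pd (μ a) h * minv h) * minv g by noncomm_ring,
        mul_minv hhinv, mul_one]
    · have hsm : ∀ f ∈ (parts l).map (pterm g h μ), MSmooth f := by
        simp only [List.mem_map]
        rintro f ⟨L, -, rfl⟩
        exact MSmooth.pterm hg hginv hh hhinv μ L
      have hmap : l.map μ ≠ [] := by simpa using hl1
      rw [List.map_cons, xiJ_cons _ _ hmap, xiJ_cons _ _ hmap, ih hl1 hl.2,
        pd_add (hg.xiJ hginv _) (MSmooth.list_sum hsm), pd_list_sum hsm, parts, List.map_flatMap,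
        List.flatMap_def, List.sum_flatten, List.map_map, List.map_map]
      congr 2
      refine List.map_congr_left fun L hL => ?_
      rw [mem_parts hl.2] at hL
      refine pd_pterm hg hginv hh hhinv μ ?_ hL.nonempty fun A hA b hb =>
        hl.1 b (List.mem_toFinset.1 (hL.subset A hA hb))
      rintro rfl
      exact hl1 (List.toFinset_eq_empty_iff _ |>.1 hL)

end Nested

/-- coordinate form of the fibered multiplication of `J^k(X,G)`: for the
pointwise product `gh`, for every `j ≥ 1` and every tuple `(μ_1,…,μ_j)` (given by
`μ : ℕ → Fin n` on indices `1,…,j`), pointwise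
`ζ^{(j)}_{μ_1…μ_j} = ξ^{(j)}_{μ_1…μ_j} + Σ_{λ ∈ P^a(j)} [ξ^{(j_{l−1})}_{λ_{l−1}}, […, [ξ^{(j_1)}_{λ_1}, g η^{(j_l)}_{λ_l} g⁻¹] …]]`. -/
theorem product_formula (n N : ℕ) (hn : 1 ≤ n) (hN : 1 ≤ N)
    (g h : (Fin n → ℝ) → Matrix (Fin N) (Fin N) ℝ)
    (hg : MSmooth g) (hh : MSmooth h)
    (hginv : ∀ x, IsUnit (g x)) (hhinv : ∀ x, IsUnit (h x))
    (j : ℕ) (hj : 1 ≤ j) (μ : ℕ → Fin n) (x : Fin n → ℝ) :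
    xiBlock (fun y => g y * h y) μ (Finset.Icc 1 j) x
      = xiBlock g μ (Finset.Icc 1 j) x
        + ∑ᶠ L ∈ {L : List (Finset ℕ) | IsPAnti j L}, prodTerm g h μ L x := by
  have hl : ((Finset.Icc 1 j).sort (· ≤ ·)).Pairwise (· < ·) :=
    (Finset.sortedLT_sort _).pairwise
  have hl0 : (Finset.Icc 1 j).sort (· ≤ ·) ≠ [] := by
    rw [ne_eq, ← List.toFinset_eq_empty_iff, Finset.sort_toFinset, ← ne_eq,
      ← Finset.nonempty_iff_ne_empty]
    exact ⟨1, Finset.mem_Icc.2 ⟨le_rfl, hj⟩⟩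
  have hset : {L : List (Finset ℕ) | IsPAnti j L}
      = ((parts ((Finset.Icc 1 j).sort (· ≤ ·))).toFinset : Set (List (Finset ℕ))) := by
    ext L
    rw [Set.mem_ofPred_eq, isPAnti_iff, Finset.mem_coe, List.mem_toFinset, mem_parts hl,
      Finset.sort_toFinset]
  have heval : ∀ l : List (MMap n N), l.sum x = (l.map fun f => f x).sum := by
    intro l
    induction l with
    | nil => rfl
    | cons f l ih => rw [List.sum_cons, List.map_cons, List.sum_cons, ← ih]; rfl
  rw [hset, finsum_mem_coe_finset, List.sum_toFinset _ (nodup_parts hl)]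
  refine (congrFun (xiJ_mul hg hginv hh hhinv μ hl0 hl) x).trans ?_
  rw [Pi.add_apply, heval, List.map_map]
  simp only [Function.comp_def, pterm_apply]
  rfl
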